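/- Let φ: R → S be a flat local homomorphism of Noetherian local rings satisfying condition (†), and let 0 → N₁ → N → N₂ → 0 be an exact sequence of finitely generated S-modules. If N₁ ≅ S ⊗_R M₁ and N₂ ≅ S ⊗_R M₂ are extended from finitely generated R-modules and Ext^1_S(N₂, N₁) is finitely generated as an R-module, then N is also extended from a finitely generated R-module. -/

import Mathlib

open CategoryTheory TensorProduct

/-- A finitely generated `S`-module `N` is *extended* (along `R → S`) if
`N ≅ S ⊗[R] M` as `S`-modules for some finitely generated `R`-module `M`. -/
def IsExtended (R S : Type) [CommRing R] [CommRing S] [Algebra R S]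
    (N : Type) [AddCommGroup N] [Module S N] : Prop :=
  ∃ (M : Type) (_ : AddCommGroup M) (_ : Module R M),
    Module.Finite R M ∧ Nonempty (N ≃ₗ[S] S ⊗[R] M)

/-!
Present `N₂` as the cokernel of `S ⊗ K → S ⊗ F` with `F` finite free over `R`. Pushing out along
`h : S ⊗ K → S ⊗ M₁` produces the extensions of `N₂` by `S ⊗ M₁`, and `h` matters only through its
image in `Ext¹(N₂, N₁)`. Flatness gives `Hom(S ⊗ K, S ⊗ M₁) ≅ S ⊗ Hom(K, M₁)`; as `S = R + IS` and
`Ext¹(N₂, N₁)` is finite over `R`, Nakayama's lemma shows that every `S`-multiple of an element of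
`Ext¹(N₂, N₁)` is an `R`-multiple of it. Hence the class of `N` comes from some `K → M₁` over `R`,
and `N` is the base change of the pushout of `K → F` along that map.
-/

section ExtCocycles

open Limits

variable {S C : Type*} [Ring S] [Category* C] [Abelian C] [Linear S C]

/-- The class in `Extⁿ(X, Y)` of an `n`-cocycle with values in `Y`, i.e. of a morphism
`P.complex.X n ⟶ Y` whose composite with the differential vanishes. -/
noncomputable def extOfCocycle [EnoughProjectives C] {X : C} (P : ProjectiveResolution X) (n : ℕ)
    (Y : C) : LinearMap.ker (Linear.leftComp S Y (P.complex.d (n + 1) n)) →ₗ[S]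
      ((Ext S C n).obj (Opposite.op X)).obj Y :=
  let Z := LinearMap.ker (Linear.leftComp S Y (P.complex.d (n + 1) n))
  let D := P.complex.linearYonedaObj S Y
  let k : ModuleCat.of S Z ⟶ D.X n := ModuleCat.ofHom Z.subtype
  (D.liftCycles k (n + 1) (by simp) (by ext z; exact z.2) ≫ D.homologyπ n ≫
    (P.isoExt n Y).inv).hom

theorem extOfCocycle_eq_zero_iff [EnoughProjectives C] {X : C} (P : ProjectiveResolution X) (n : ℕ)
    {Y : C} (z : LinearMap.ker (Linear.leftComp S Y (P.complex.d (n + 2) (n + 1)))) :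
    extOfCocycle P (n + 1) Y z = 0 ↔ ∃ t : P.complex.X n ⟶ Y, P.complex.d (n + 1) n ≫ t = z := by
  let Z := LinearMap.ker (Linear.leftComp S Y (P.complex.d (n + 2) (n + 1)))
  let D := P.complex.linearYonedaObj S Y
  let k : ModuleCat.of S Z ⟶ D.X (n + 1) := ModuleCat.ofHom Z.subtype
  have hk : k ≫ D.d (n + 1) (n + 2) = 0 := by ext z; exact z.2
  let ζ : D.cycles (n + 1) := D.liftCycles k (n + 2) (by simp) hk z
  have hζ : D.iCycles (n + 1) ζ = z.1 := congr($(D.liftCycles_i k (n + 2) (by simp) hk) z)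
  have hiso : Function.Injective (P.isoExt (R := S) (n + 1) Y).inv :=
    (ModuleCat.mono_iff_injective _).1 inferInstance
  have hi : Function.Injective (D.iCycles (n + 1)) :=
    (ModuleCat.mono_iff_injective _).1 inferInstance
  have hexact : (ShortComplex.mk _ _ (D.toCycles_comp_homologyπ n (n + 1))).Exact :=
    ShortComplex.exact_of_g_is_cokernel _ (D.homologyIsCokernel n (n + 1) (by simp))
  have hd (t : D.X n) : D.iCycles (n + 1) (D.toCycles n (n + 1) t) = D.d n (n + 1) t :=
    congr($(D.toCycles_i n (n + 1)) t)
  calc extOfCocycle P (n + 1) Y z = 0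
    _ ↔ D.homologyπ (n + 1) ζ = 0 := map_eq_zero_iff _ hiso
    _ ↔ ∃ t, D.toCycles n (n + 1) t = ζ :=
      (ShortComplex.ShortExact.moduleCat_exact_iff_function_exact _).1 hexact ζ
    _ ↔ ∃ t, D.d n (n + 1) t = z.1 := by simp only [← hi.eq_iff, hd, hζ]

theorem exists_kernel_ι_comp_eq_iff {T : ShortComplex C} (hT : T.ShortExact) [Projective T.X₂]
    {Q : C} [Projective Q] (ε : Q ⟶ T.X₃) [Epi ε] :
    ∃ c : kernel ε ⟶ T.X₁, ∀ {Y : C} (h : T.X₁ ⟶ Y),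
      (∃ t : Q ⟶ Y, kernel.ι ε ≫ t = c ≫ h) ↔ ∃ u : T.X₂ ⟶ Y, T.f ≫ u = h := by
  have := hT.mono_f
  have := hT.epi_g
  let a : Q ⟶ T.X₂ := Projective.factorThru ε T.g
  have ha : a ≫ T.g = ε := Projective.factorThru_comp _ _
  let b : T.X₂ ⟶ Q := Projective.factorThru T.g ε
  have hb : b ≫ ε = T.g := Projective.factorThru_comp _ _
  obtain ⟨c, hc⟩ := hT.exact.lift' (kernel.ι ε ≫ a) (by simp [ha])
  obtain ⟨r, hr⟩ := hT.exact.lift' (𝟙 T.X₂ - b ≫ a) (by simp [ha, hb])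
  let w : T.X₁ ⟶ kernel ε := kernel.lift ε (T.f ≫ b) (by simp [hb])
  have hwc : w ≫ c + T.f ≫ r = 𝟙 T.X₁ := by
    rw [← cancel_mono T.f]
    simp [hc, hr, w]
  refine ⟨c, fun h => ⟨?_, ?_⟩⟩
  · rintro ⟨t, ht⟩
    refine ⟨b ≫ t + r ≫ h, ?_⟩
    calc T.f ≫ (b ≫ t + r ≫ h)
      _ = w ≫ kernel.ι ε ≫ t + T.f ≫ r ≫ h := by simp [w]
      _ = (w ≫ c + T.f ≫ r) ≫ h := by simp [ht]
      _ = h := by rw [hwc, Category.id_comp]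
  · rintro ⟨u, rfl⟩
    exact ⟨a ≫ u, by rw [reassoc_of% hc]⟩

theorem exists_exact_leftComp_ext_one [EnoughProjectives C] {T : ShortComplex C}
    (hT : T.ShortExact) [Projective T.X₂] (Y : C) :
    ∃ δ : (T.X₁ ⟶ Y) →ₗ[S] ((Ext S C 1).obj (Opposite.op T.X₃)).obj Y,
      Function.Exact (Linear.leftComp S Y T.f) δ := by
  let P := projectiveResolution T.X₃
  let ε : P.complex.X 0 ⟶ T.X₃ := P.π.f 0
  have : Epi ε := inferInstanceAs (Epi (P.π.f 0))
  have hε : (ShortComplex.mk _ _ P.complex_d_comp_π_f_zero).Exact := P.exact₀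
  obtain ⟨c, hc⟩ := exists_kernel_ι_comp_eq_iff hT ε
  let q : P.complex.X 1 ⟶ kernel ε := kernel.lift ε (P.complex.d 1 0) P.complex_d_comp_π_f_zero
  have hq : q ≫ kernel.ι ε = P.complex.d 1 0 := kernel.lift_ι _ _ _
  have : Epi q := hε.epi_kernelLift
  have hcocycle (h : T.X₁ ⟶ Y) : Linear.leftComp S Y (P.complex.d 2 1) (q ≫ c ≫ h) = 0 := by
    have hdq : P.complex.d 2 1 ≫ q = 0 := by
      rw [← cancel_mono (kernel.ι ε), Category.assoc, hq, P.complex.d_comp_d, zero_comp]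
    simp [reassoc_of% hdq]
  let δ := extOfCocycle P 1 Y ∘ₗ
    (Linear.leftComp S Y q ∘ₗ Linear.leftComp S Y c).codRestrict _ hcocycle
  refine ⟨δ, fun h => ?_⟩
  calc δ h = 0
    _ ↔ ∃ t : P.complex.X 0 ⟶ Y, P.complex.d 1 0 ≫ t = q ≫ c ≫ h :=
      extOfCocycle_eq_zero_iff P 0 _
    _ ↔ ∃ t : P.complex.X 0 ⟶ Y, kernel.ι ε ≫ t = c ≫ h := by
      simp only [← cancel_epi q, reassoc_of% hq]
    _ ↔ ∃ u : T.X₂ ⟶ Y, T.f ≫ u = h := hc h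

end ExtCocycles

theorem exists_exact_lcomp_ext_one.{u} {S X Y F K : Type u} [CommRing S]
    [AddCommGroup X] [AddCommGroup Y] [AddCommGroup F] [AddCommGroup K]
    [Module S X] [Module S Y] [Module S F] [Module S K] [Module.Projective S F]
    {i : K →ₗ[S] F} {p : F →ₗ[S] X} (hi : Function.Injective i) (hip : Function.Exact i p)
    (hp : Function.Surjective p) :
    ∃ δ : (K →ₗ[S] Y) →ₗ[S] ((Ext S (ModuleCat S) 1).obj
        (Opposite.op (ModuleCat.of S X))).obj (ModuleCat.of S Y),
      Function.Exact (LinearMap.lcomp S Y i) δ := by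
  let T := ModuleCat.shortComplexOfCompEqZero i p hip.linearMap_comp_eq_zero
  have hT : T.ShortExact := ModuleCat.shortComplex_shortExact T hip hi hp
  have : Projective T.X₂ := (IsProjective.iff_projective F).1 ‹_›
  obtain ⟨δ, hδ⟩ := exists_exact_leftComp_ext_one (S := S) hT (ModuleCat.of S Y)
  refine ⟨δ ∘ₗ (ModuleCat.homLinearEquiv (S := S) (M := .of S K) (N := .of S Y)).symm.toLinearMap,
    fun h => (hδ (ModuleCat.ofHom h)).trans ⟨?_, ?_⟩⟩
  · rintro ⟨t, ht⟩
    exact ⟨t.hom, congr(ModuleCat.Hom.hom $ht)⟩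
  · rintro ⟨t, rfl⟩
    exact ⟨ModuleCat.ofHom t, rfl⟩

section Nakayama

variable {R S E : Type*} [CommRing R] [CommRing S] [Algebra R S] [AddCommGroup E] [Module R E]
  [Module S E] [IsScalarTower R S E] [IsNoetherian R E] {I : Ideal R}

theorem exists_smul_eq_smul (hI : I ≤ Ideal.jacobson ⊥)
    (hS : ∀ s : S, ∃ r : R, s - algebraMap R S r ∈ I.map (algebraMap R S)) (s : S) (x : E) :
    ∃ r : R, r • x = s • x := by
  let ev : S →ₗ[R] E := (LinearMap.toSpanSingleton S E x).restrictScalars R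
  have hsup : (⊤ : Submodule R S) ≤ LinearMap.range (Algebra.linearMap R S) ⊔ I • ⊤ := by
    intro s _
    obtain ⟨r, hr⟩ := hS s
    rw [← add_sub_cancel (algebraMap R S r) s]
    refine Submodule.add_mem_sup ⟨r, rfl⟩ ?_
    rwa [Ideal.smul_top_eq_map]
  have hle : LinearMap.range ev ≤ Submodule.span R {x} ⊔ I • LinearMap.range ev :=
    calc LinearMap.range ev
      _ ≤ (LinearMap.range (Algebra.linearMap R S) ⊔ I • ⊤).map ev := by
        rw [LinearMap.range_eq_map]
        exact Submodule.map_mono hsup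
      _ = Submodule.span R {x} ⊔ I • LinearMap.range ev := by
        rw [Submodule.map_sup, Submodule.map_smul'', ← LinearMap.range_eq_map,
          ← LinearMap.range_comp, LinearMap.span_singleton_eq_range]
        congr 2
        ext
        simp [ev]
  have hspan : LinearMap.range ev ≤ Submodule.span R {x} :=
    Submodule.le_of_le_smul_of_le_jacobson_bot (IsNoetherian.noetherian _) hI hle
  exact Submodule.mem_span_singleton.1 (hspan ⟨s, rfl⟩)

theorem exists_apply_eq_of_isBaseChange (hI : I ≤ Ideal.jacobson ⊥)
    (hS : ∀ s : S, ∃ r : R, s - algebraMap R S r ∈ I.map (algebraMap R S))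
    {A B : Type*} [AddCommMonoid A] [AddCommMonoid B] [Module R A] [Module S A]
    [IsScalarTower R S A] [Module R B] {β : B →ₗ[R] A} (hβ : IsBaseChange S β)
    (Φ : A →ₗ[S] E) (a : A) : ∃ b, Φ (β b) = Φ a := by
  induction a using hβ.inductionOn with
  | zero => exact ⟨0, by simp⟩
  | tmul b => exact ⟨b, rfl⟩
  | smul s a ha =>
    obtain ⟨b, hb⟩ := ha
    obtain ⟨r, hr⟩ := exists_smul_eq_smul hI hS s (Φ (β b))
    exact ⟨r • b, by simp [hr, ← hb]⟩
  | add a a' ha ha' =>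
    obtain ⟨b, hb⟩ := ha
    obtain ⟨b', hb'⟩ := ha'
    exact ⟨b + b', by simp [hb, hb']⟩

theorem exists_apply_baseChange_eq [IsNoetherianRing R] [Module.Flat R S]
    (hI : I ≤ Ideal.jacobson ⊥)
    (hS : ∀ s : S, ∃ r : R, s - algebraMap R S r ∈ I.map (algebraMap R S))
    {K M V : Type*} [AddCommGroup K] [AddCommGroup M] [AddCommGroup V] [Module R K] [Module R M]
    [Module S V] [Module.Finite R K] [Module.Finite R (RestrictScalars R S V)]
    (Φ : (S ⊗[R] K →ₗ[S] S ⊗[R] M) →ₗ[S] V) (h : S ⊗[R] K →ₗ[S] S ⊗[R] M) :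
    ∃ b : K →ₗ[R] M, Φ (b.baseChange S) = Φ h := by
  let _ : Module R V := Module.compHom V (algebraMap R S)
  have : IsScalarTower R S V := .of_compHom R S V
  have : Module.Finite R V := ‹Module.Finite R (RestrictScalars R S V)›
  have : Module.FinitePresentation R K := Module.finitePresentation_of_finite R K
  have hbase := Module.FinitePresentation.isBaseChange_map R K M S
  exact exists_apply_eq_of_isBaseChange hI hS hbase Φ h

end Nakayama

section Extensions

variable {S K F N₁ N N₂ : Type*} [Ring S] [AddCommGroup K] [AddCommGroup F] [AddCommGroup N₁]
  [AddCommGroup N] [AddCommGroup N₂] [Module S K] [Module S F] [Module S N₁] [Module S N]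
  [Module S N₂] {f : N₁ →ₗ[S] N} {g : N →ₗ[S] N₂} {i : K →ₗ[S] F} {p : F →ₗ[S] N₂}
  {l : F →ₗ[S] N} {h : K →ₗ[S] N₁}

theorem exists_lift_of_exact [Module.Projective S F] (hf : Function.Injective f)
    (hg : Function.Surjective g) (hfg : Function.Exact f g) (hpi : p ∘ₗ i = 0) :
    ∃ (l : F →ₗ[S] N) (h : K →ₗ[S] N₁), g ∘ₗ l = p ∧ f ∘ₗ h = l ∘ₗ i := by
  obtain ⟨l, rfl⟩ := Module.projective_lifting_property g p hg
  have hli (k : K) : (l ∘ₗ i) k ∈ LinearMap.range f := (hfg _).1 congr($hpi k)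
  exact ⟨l, (LinearEquiv.ofInjective f hf).symm.toLinearMap ∘ₗ (l ∘ₗ i).codRestrict _ hli, rfl,
    by ext; simp⟩

theorem surjective_coprod_of_exact (hfg : Function.Exact f g) (hp : Function.Surjective p)
    (hl : g ∘ₗ l = p) : Function.Surjective (l.coprod f) := by
  intro n
  obtain ⟨x, hx⟩ := hp (g n)
  obtain ⟨y, hy⟩ := (hfg (n - l x)).1 (by simp [← hx, ← hl])
  exact ⟨(x, y), by simp [hy]⟩

theorem exact_prod_neg_coprod (hf : Function.Injective f) (hfg : Function.Exact f g)
    (hip : Function.Exact i p) (hl : g ∘ₗ l = p) (hh : f ∘ₗ h = l ∘ₗ i) :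
    Function.Exact (i.prod (-h)) (l.coprod f) := by
  have hh' (k : K) : l (i k) = f (h k) := congr($hh.symm k)
  rintro ⟨x, y⟩
  constructor
  · intro hxy
    rw [LinearMap.coprod_apply] at hxy
    have hpx : p x = 0 := by
      simpa [← hl, hfg.apply_apply_eq_zero] using congr(g $hxy)
    obtain ⟨k, rfl⟩ := (hip x).1 hpx
    rw [hh', ← map_add, map_eq_zero_iff f hf] at hxy
    exact ⟨k, Prod.ext rfl (neg_eq_of_add_eq_zero_right hxy)⟩
  · rintro ⟨k, hk⟩
    simp [← hk, hh']

end Extensions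

namespace IsExtended

variable {R S N N₂ M₁ F K : Type} [CommRing R] [CommRing S] [Algebra R S] [AddCommGroup N]
  [AddCommGroup N₂] [AddCommGroup M₁] [AddCommGroup F] [AddCommGroup K]
  [Module S N] [Module S N₂] [Module R M₁] [Module R F] [Module R K]

theorem exists_presentation (hN : IsExtended R S N) :
    ∃ (n : ℕ) (K : Submodule R (Fin n → R)) (p : S ⊗[R] (Fin n → R) →ₗ[S] N),
      Function.Exact (K.subtype.baseChange S) p ∧ Function.Surjective p := by
  obtain ⟨M, _, _, _, ⟨e⟩⟩ := hN
  obtain ⟨n, q, hq⟩ := Module.Finite.exists_fin' R M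
  exact ⟨n, LinearMap.ker q, e.symm.toLinearMap ∘ₗ q.baseChange S,
    (lTensor_exact S (LinearMap.exact_subtype_ker_map q) hq).comp_injective _ e.symm.injective
      (map_zero e.symm),
    e.symm.surjective.comp (LinearMap.lTensor_surjective S hq)⟩

theorem of_exact_baseChange [Module.Finite R F] {j : K →ₗ[R] F} {G : S ⊗[R] F →ₗ[S] N}
    (hjG : Function.Exact (j.baseChange S) G) (hG : Function.Surjective G) :
    IsExtended R S N := by
  let q := (LinearMap.range j).mkQ
  have hq : Function.Exact (j.baseChange S) (q.baseChange S) :=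
    lTensor_exact S (LinearMap.exact_map_mkQ_range j) (Submodule.mkQ_surjective _)
  have hqsurj : Function.Surjective (q.baseChange S) :=
    LinearMap.lTensor_surjective S (Submodule.mkQ_surjective _)
  exact ⟨F ⧸ LinearMap.range j, inferInstance, inferInstance, inferInstance,
    ⟨(hjG.linearEquivOfSurjective hG).symm ≪≫ₗ hq.linearEquivOfSurjective hqsurj⟩⟩

theorem of_pushout [Module.Finite R F] [Module.Finite R M₁] {f : S ⊗[R] M₁ →ₗ[S] N}
    {g : N →ₗ[S] N₂} (hf : Function.Injective f) (hfg : Function.Exact f g)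
    {i : K →ₗ[R] F} {p : S ⊗[R] F →ₗ[S] N₂} (hip : Function.Exact (i.baseChange S) p)
    (hp : Function.Surjective p) {l : S ⊗[R] F →ₗ[S] N} (hl : g ∘ₗ l = p) {b : K →ₗ[R] M₁}
    (hb : f ∘ₗ b.baseChange S = l ∘ₗ i.baseChange S) :
    IsExtended R S N := by
  let θ := TensorProduct.prodRight R S S F M₁
  have hθ : θ.toLinearMap ∘ₗ (i.prod (-b)).baseChange S =
      (i.baseChange S).prod (-b.baseChange S) := by
    ext <;> simp [θ, TensorProduct.tmul_neg]
  have hexact : Function.Exact ((i.prod (-b)).baseChange S) (l.coprod f ∘ₗ θ.toLinearMap) := by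
    rw [← LinearEquiv.conj_exact_iff_exact _ _ θ, hθ, LinearMap.comp_assoc]
    simpa using exact_prod_neg_coprod hf hfg hip hl hb
  exact of_exact_baseChange hexact ((surjective_coprod_of_exact hfg hp hl).comp θ.surjective)

end IsExtended

theorem stmt_18_general {R S : Type} [CommRing R] [CommRing S] [IsNoetherianRing R]
    [Algebra R S] [Module.Flat R S] {I : Ideal R} (hI : I ≤ Ideal.jacobson ⊥)
    (hS : ∀ s : S, ∃ r : R, s - algebraMap R S r ∈ I.map (algebraMap R S))
    {N₁ N N₂ : Type} [AddCommGroup N₁] [AddCommGroup N] [AddCommGroup N₂]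
    [Module S N₁] [Module S N] [Module S N₂] {f : N₁ →ₗ[S] N} {g : N →ₗ[S] N₂}
    (hf : Function.Injective f) (hg : Function.Surjective g) (hexact : Function.Exact f g)
    (hN₁ : IsExtended R S N₁) (hN₂ : IsExtended R S N₂)
    (hext : Module.Finite R (RestrictScalars R S
      (((Ext S (ModuleCat S) 1).obj (Opposite.op (ModuleCat.of S N₂))).obj
        (ModuleCat.of S N₁)))) :
    IsExtended R S N := by
  obtain ⟨M₁, _, _, _, ⟨e⟩⟩ := hN₁
  obtain ⟨n, K, p, hip, hp⟩ := hN₂.exists_presentation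
  have hi : Function.Injective (K.subtype.baseChange S) :=
    Module.Flat.lTensor_preserves_injective_linearMap _ K.injective_subtype
  obtain ⟨δ, hδ⟩ := exists_exact_lcomp_ext_one (Y := N₁) hi hip hp
  let f' : S ⊗[R] M₁ →ₗ[S] N := f ∘ₗ e.symm.toLinearMap
  have hf' : Function.Injective f' := hf.comp e.symm.injective
  have hexact' : Function.Exact f' g := e.symm.precomp_exact_iff_exact.2 hexact
  obtain ⟨l, h, hl, hh⟩ := exists_lift_of_exact hf' hg hexact' hip.linearMap_comp_eq_zero
  let Φ := δ ∘ₗ e.symm.toLinearMap.compRight S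
  obtain ⟨b, hb⟩ := exists_apply_baseChange_eq hI hS Φ h
  have hΦ : Φ (h - b.baseChange S) = 0 := (map_sub Φ _ _).trans (sub_eq_zero.2 hb.symm)
  obtain ⟨t, ht : t ∘ₗ _ = e.symm.toLinearMap ∘ₗ (h - b.baseChange S)⟩ := (hδ _).1 hΦ
  refine .of_pushout hf' hexact' hip hp (l := l - f ∘ₗ t) (b := b) ?_ ?_
  · rw [LinearMap.comp_sub, ← LinearMap.comp_assoc, hexact.linearMap_comp_eq_zero,
      LinearMap.zero_comp, sub_zero, hl]
  · calc f' ∘ₗ b.baseChange S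
      _ = l ∘ₗ K.subtype.baseChange S - f' ∘ₗ (h - b.baseChange S) := by
        rw [LinearMap.comp_sub, hh, sub_sub_cancel]
      _ = (l - f ∘ₗ t) ∘ₗ K.subtype.baseChange S := by
        rw [LinearMap.sub_comp, LinearMap.comp_assoc, LinearMap.comp_assoc, ht]

theorem stmt_18 (R S : Type) [CommRing R] [CommRing S]
    [IsNoetherianRing R] [IsNoetherianRing S] [IsLocalRing R] [IsLocalRing S]
    [Algebra R S] [Module.Flat R S] [IsLocalHom (algebraMap R S)]
    (h1 : (IsLocalRing.maximalIdeal R).map (algebraMap R S) = IsLocalRing.maximalIdeal S)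
    (h2 : ∀ s : S, ∃ r : R, s - algebraMap R S r ∈ IsLocalRing.maximalIdeal S)
    (N₁ N N₂ : Type) [AddCommGroup N₁] [AddCommGroup N] [AddCommGroup N₂]
    [Module S N₁] [Module S N] [Module S N₂]
    [Module.Finite S N₁] [Module.Finite S N] [Module.Finite S N₂]
    (f : N₁ →ₗ[S] N) (g : N →ₗ[S] N₂)
    (hf : Function.Injective f) (hg : Function.Surjective g)
    (hexact : Function.Exact f g)
    (hN₁ : IsExtended R S N₁) (hN₂ : IsExtended R S N₂)
    (hext : Module.Finite R (RestrictScalars R S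
      (((Ext S (ModuleCat S) 1).obj (Opposite.op (ModuleCat.of S N₂))).obj
        (ModuleCat.of S N₁)))) :
    IsExtended R S N :=
  stmt_18_general (IsLocalRing.maximalIdeal_le_jacobson _) (h1 ▸ h2) hf hg hexact hN₁ hN₂ hext
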